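/- arXiv:1008.4996 — 3 statements merged into one kernel-verified Lean document; each statement's English description precedes it below -/
import Mathlib

section
/- (Theorem 2.6 of the paper, compactly supported solutions of the linearized constraints with prescribed angular-momentum moments.) Given any vector λ = (λ₁, λ₂, λ₃) ∈ ℝ³, there exist smooth symmetric (0,2)-tensor fields σ and τ on ℝ³, both compactly supported in the annulus A₁, satisfying the symmetry σ(x) = σ(−x) and τ(x) = τ(−x) for all x, the linearized constraint equations L σ = 0 everywhere and (div τ)_j = 0 for j = 1,2,3 everywhere, and such that for each k = 1,2,3 the moment integral ∫_{A₁} Σ_{i,j,l} [ (1/2) (∂_l τ_{ij})(x) (Y_k(x))_l + τ_{il}(x) ∂_j((Y_k)_l)(x) ] σ_{ij}(x) dx = λ_k. -/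
/-!
The moment integral is `½ ∫ ⟨σ, 𝓛_{Y_k} τ⟩`, bilinear in `(σ, τ)`. The tensor `τ` is fixed and `σ`
is chosen in a three-parameter family on which the moments form an invertible linear map.

Both constraint equations are solved by potentials. For a smooth `u` the Airy tensor (`airy`)
`τ₁₁ = ∂₂∂₂u`, `τ₁₂ = -∂₁∂₂u`, `τ₂₂ = ∂₁∂₁u` is divergence free (`airy_div`). For a smooth `f` and a
constant symmetric matrix `H` with zero diagonal, the symmetrized curl of `f H` (`symCurl`) is
traceless with vanishing double divergence, hence `L σ = 0` (`symCurl_linearizedScalar`).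

The potentials are localized so that no derivative of a cutoff enters the integral. With bumps `φ`
and `χ` at `p = (0, 0, 3/2)`, where `χ = 1` near the support of `φ`, take `f(x) = φ(x) - φ(-x)`
(odd, so `σ` is even) and `u(x) = (χ(x) - χ(-x)) x₁x₂x₃` (even, so `τ` is even). On the support of
`f` the stress function is `± x₁x₂x₃`, so `τ` is linear with only `τ₁₂ = ∓ x₃` (`airy_local`).
The sign turns `∂f` into `∂g` with `g(x) = φ(x) + φ(-x)` (`moment_integrand`), and integrating by
parts yields the moments `2a I`, `2b I`, `-4c I` with `I = ∫ g > 0` (`moments`), where `a, b, c` are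
the entries of `H`.
-/

open MeasureTheory

/-- The `i`-th coordinate partial derivative of a function on `ℝ³`. -/
noncomputable def pd (i : Fin 3) (f : (Fin 3 → ℝ) → ℝ) (x : Fin 3 → ℝ) : ℝ :=
  fderiv ℝ f x (Pi.single i 1)

/-- The annulus `A₁ = {x : 1 < |x| < 2}` (Euclidean norm). -/
def annulusA₁ : Set (Fin 3 → ℝ) :=
  {x | 1 < Real.sqrt (∑ i, x i ^ 2) ∧ Real.sqrt (∑ i, x i ^ 2) < 2}

/-- The rotation vector field `Y_k(x) = e_k × x`. -/
noncomputable def rotY (k : Fin 3) (x : Fin 3 → ℝ) : Fin 3 → ℝ :=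
  crossProduct (Pi.single k 1) x

/-! ### Partial derivatives -/

theorem pd_contDiff {f : (Fin 3 → ℝ) → ℝ} (hf : ContDiff ℝ (⊤ : ℕ∞) f) (i : Fin 3) :
    ContDiff ℝ (⊤ : ℕ∞) (pd i f) :=
  (hf.fderiv_right (m := (⊤ : ℕ∞)) (by simp)).clm_apply contDiff_const

theorem pd_comm {f : (Fin 3 → ℝ) → ℝ} (hf : ContDiff ℝ (⊤ : ℕ∞) f) (i j : Fin 3) :
    pd i (pd j f) = pd j (pd i f) := by
  have hd : Differentiable ℝ (fderiv ℝ f) :=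
    (hf.fderiv_right (m := (⊤ : ℕ∞)) (by simp)).differentiable (by simp)
  have key : ∀ (a b : Fin 3) (x : Fin 3 → ℝ),
      pd a (pd b f) x = fderiv ℝ (fderiv ℝ f) x (Pi.single a 1) (Pi.single b 1) := by
    intro a b x
    change fderiv ℝ (fun y => fderiv ℝ f y (Pi.single b 1)) x (Pi.single a 1) = _
    rw [fderiv_clm_apply (hd x) (differentiableAt_const _)]
    simp
  ext x
  rw [key, key]
  exact (hf.contDiffAt.isSymmSndFDerivAt
    (by simpa using (WithTop.coe_le_coe.mpr le_top : ((2 : ℕ∞) : WithTop ℕ∞) ≤ _))).eq _ _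

theorem pd_comp_neg (f : (Fin 3 → ℝ) → ℝ) (i : Fin 3) (x : Fin 3 → ℝ) :
    pd i (fun y => f (-y)) x = -pd i f (-x) := by
  have h := (ContinuousLinearEquiv.neg ℝ (M := Fin 3 → ℝ)).comp_right_fderiv (f := f) (x := x)
  have h' := congrArg (fun L => L (Pi.single i 1)) h
  refine Eq.trans h' ?_
  simp [pd]

/-- Partial derivatives of an even function are odd. -/
theorem pd_odd {f : (Fin 3 → ℝ) → ℝ} (h : ∀ x, f (-x) = f x) (i : Fin 3) (x : Fin 3 → ℝ) :
    pd i f (-x) = -pd i f x := by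
  have := pd_comp_neg f i x
  simp only [h] at this
  rw [this, neg_neg]

/-- Partial derivatives of an odd function are even. -/
theorem pd_even {f : (Fin 3 → ℝ) → ℝ} (h : ∀ x, f (-x) = -f x) (i : Fin 3) (x : Fin 3 → ℝ) :
    pd i f (-x) = pd i f x := by
  have := pd_comp_neg f i x
  simp only [h] at this
  have h2 : pd i (fun y => -f y) x = -pd i f x := by simp [pd]
  linarith

theorem pd_eventuallyEq {f g : (Fin 3 → ℝ) → ℝ} {x : Fin 3 → ℝ} (h : f =ᶠ[nhds x] g)
    (i : Fin 3) : pd i f =ᶠ[nhds x] pd i g :=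
  h.fderiv.fun_comp (fun L => L (Pi.single i 1))

theorem pd_eq_zero {f : (Fin 3 → ℝ) → ℝ} {x : Fin 3 → ℝ} (h : x ∉ tsupport f)
    (i : Fin 3) : pd i f x = 0 := by
  have := (pd_eventuallyEq (notMem_tsupport_iff_eventuallyEq.mp h) i).self_of_nhds
  simpa [pd] using this

theorem notMem_tsupport_pd {f : (Fin 3 → ℝ) → ℝ} {x : Fin 3 → ℝ} (h : x ∉ tsupport f)
    (i : Fin 3) : x ∉ tsupport (pd i f) := by
  rw [notMem_tsupport_iff_eventuallyEq]
  filter_upwards [pd_eventuallyEq (notMem_tsupport_iff_eventuallyEq.mp h) i] with y hy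
  rw [hy]; simp [pd]

theorem pd_linear (L : (Fin 3 → ℝ) →ₗ[ℝ] ℝ) (i : Fin 3) (x : Fin 3 → ℝ) :
    pd i (fun y => L y) x = L (Pi.single i 1) := by
  change fderiv ℝ (fun y => LinearMap.toContinuousLinearMap L y) x _ = _
  rw [ContinuousLinearMap.fderiv]; rfl

theorem pd_coord (i j : Fin 3) (x : Fin 3 → ℝ) :
    pd i (fun y => y j) x = if j = i then 1 else 0 := by
  refine (pd_linear (LinearMap.proj j) i x).trans ?_
  simp [Pi.single_apply]

/-- `Y_k` is linear, so its Jacobian is constant. -/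
theorem pd_rotY (k l i : Fin 3) (x : Fin 3 → ℝ) :
    pd i (fun y => rotY k y l) x = rotY k (Pi.single i 1) l :=
  pd_linear (LinearMap.proj l ∘ₗ crossProduct (Pi.single k 1)) i x

theorem hasCompactSupport_pd {f : (Fin 3 → ℝ) → ℝ} (hc : HasCompactSupport f) (i : Fin 3) :
    HasCompactSupport (pd i f) :=
  hc.of_isClosed_subset (isClosed_tsupport _) fun x hx => by
    by_contra h
    exact notMem_tsupport_pd h i hx

theorem integrable_coord_mul_pd {f : (Fin 3 → ℝ) → ℝ} (hf : ContDiff ℝ (⊤ : ℕ∞) f)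
    (hc : HasCompactSupport f) (i j : Fin 3) :
    Integrable fun x : Fin 3 → ℝ => x j * pd i f x :=
  ((continuous_apply j).mul (pd_contDiff hf i).continuous).integrable_of_hasCompactSupport
    (hasCompactSupport_pd hc i).mul_left

/-- Integration by parts: `∫ x_j ∂_i f = -δ_{ij} ∫ f`. -/
theorem integral_coord_mul_pd {f : (Fin 3 → ℝ) → ℝ} (hf : ContDiff ℝ (⊤ : ℕ∞) f)
    (hc : HasCompactSupport f) (i j : Fin 3) :
    ∫ x, x j * pd i f x = if j = i then -∫ x, f x else 0 := by
  have key : ∀ (x : Fin 3 → ℝ), fderiv ℝ (fun y : Fin 3 → ℝ => y j) x (Pi.single i 1)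
      = if j = i then 1 else 0 := pd_coord i j
  have := integral_mul_fderiv_eq_neg_fderiv_mul_of_integrable (μ := volume)
    (f := fun x : Fin 3 → ℝ => x j) (g := f) (v := Pi.single i 1) (𝕜 := ℝ) ?_ ?_ ?_
    (by fun_prop) (fun x _ => hf.differentiable (by simp) x)
  · change ∫ x, x j * pd i f x = _ at this
    rw [this]; simp only [key]; split_ifs <;> simp
  · simp only [key]
    exact (continuous_const.mul hf.continuous).integrable_of_hasCompactSupport hc.mul_left
  · exact integrable_coord_mul_pd hf hc i j
  · exact ((continuous_apply j).mul hf.continuous).integrable_of_hasCompactSupport hc.mul_left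

theorem pd_lin {g h : (Fin 3 → ℝ) → ℝ} (hg : ContDiff ℝ (⊤ : ℕ∞) g)
    (hh : ContDiff ℝ (⊤ : ℕ∞) h) (r s : ℝ) (i : Fin 3) :
    pd i (fun y => r * g y + s * h y) = fun x => r * pd i g x + s * pd i h x := by
  ext x
  have hg' := hg.differentiable (by simp) x
  have hh' := hh.differentiable (by simp) x
  unfold pd
  rw [fderiv_fun_add (hg'.const_mul r) (hh'.const_mul s), fderiv_const_mul hg',
    fderiv_const_mul hh']
  simp

theorem pd_fun_zero (i : Fin 3) : pd i (fun _ => 0) = fun _ => 0 := by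
  ext x; simp [pd]

/-! ### The two potentials -/

/-- The traceless tensor `curl (f H) + (curl (f H))ᵀ`, where `H` is the constant symmetric matrix
with zero diagonal and `H₂₃ = a`, `H₁₃ = b`, `H₁₂ = c`, and `(curl h)ᵢⱼ = εᵢₘₙ ∂ₘ hₙⱼ`.
Every entry is written as `r ∂ₘ f + s ∂ₙ f`, the shape to which `pd_lin` applies. -/
noncomputable def symCurl (a b c : ℝ) (f : (Fin 3 → ℝ) → ℝ) (x : Fin 3 → ℝ) :
    Matrix (Fin 3) (Fin 3) ℝ :=
  !![2 * b * pd 1 f x + -2 * c * pd 2 f x, a * pd 1 f x + -b * pd 0 f x,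
      c * pd 0 f x + -a * pd 2 f x;
    a * pd 1 f x + -b * pd 0 f x, 2 * c * pd 2 f x + -2 * a * pd 0 f x,
      b * pd 2 f x + -c * pd 1 f x;
    c * pd 0 f x + -a * pd 2 f x, b * pd 2 f x + -c * pd 1 f x,
      2 * a * pd 0 f x + -2 * b * pd 1 f x]

/-- The symmetric tensor supported in the `(x₁, x₂)`-block with Airy stress function `u`:
`τ₁₁ = ∂₂∂₂u`, `τ₁₂ = τ₂₁ = -∂₁∂₂u`, `τ₂₂ = ∂₁∂₁u`. -/
noncomputable def airy (u : (Fin 3 → ℝ) → ℝ) (x : Fin 3 → ℝ) : Matrix (Fin 3) (Fin 3) ℝ :=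
  !![pd 1 (pd 1 u) x, -pd 0 (pd 1 u) x, 0; -pd 0 (pd 1 u) x, pd 0 (pd 0 u) x, 0; 0, 0, 0]

/-- The trace of `symCurl` vanishes, and its double divergence vanishes because partial derivatives
commute. -/
theorem symCurl_linearizedScalar (a b c : ℝ) {f : (Fin 3 → ℝ) → ℝ}
    (hf : ContDiff ℝ (⊤ : ℕ∞) f) (x : Fin 3 → ℝ) :
    ∑ i, ∑ j, (pd i (fun y => pd j (fun z => symCurl a b c f z i j) y) x
      - pd j (fun y => pd j (fun z => symCurl a b c f z i i) y) x) = 0 := by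
  simp only [Fin.sum_univ_three, symCurl, Matrix.of_apply, Matrix.cons_val]
  simp (disch := simp only [pd_contDiff, hf]) only [pd_lin]
  simp only [pd_comm hf 1 0, pd_comm hf 2 0, pd_comm hf 2 1,
    fun k => pd_comm (pd_contDiff hf k) 1 0, fun k => pd_comm (pd_contDiff hf k) 2 0,
    fun k => pd_comm (pd_contDiff hf k) 2 1]
  ring

theorem airy_div {u : (Fin 3 → ℝ) → ℝ} (hu : ContDiff ℝ (⊤ : ℕ∞) u) (j : Fin 3)
    (x : Fin 3 → ℝ) : ∑ i, pd i (fun y => airy u y i j) x = 0 := by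
  have hneg : ∀ (k : Fin 3) (g : (Fin 3 → ℝ) → ℝ) (y : Fin 3 → ℝ),
      pd k (fun z => -g z) y = -pd k g y := by
    intro k g y; simp [pd]
  fin_cases j <;>
    simp [Fin.sum_univ_three, airy, hneg, pd_fun_zero,
      pd_comm hu 1 0, fun k => pd_comm (pd_contDiff hu k) 1 0]

theorem contDiff_tensors (a b c : ℝ) {f u : (Fin 3 → ℝ) → ℝ} (hf : ContDiff ℝ (⊤ : ℕ∞) f)
    (hu : ContDiff ℝ (⊤ : ℕ∞) u) (i j : Fin 3) :
    ContDiff ℝ (⊤ : ℕ∞) (fun x => symCurl a b c f x i j) ∧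
    ContDiff ℝ (⊤ : ℕ∞) (fun x => airy u x i j) := by
  have h := fun k => pd_contDiff hf k
  have h2 := fun k l => pd_contDiff (pd_contDiff hu k) l
  fin_cases i <;> fin_cases j <;> simp [symCurl, airy] <;> constructor <;> fun_prop

theorem tensors_eq_zero (a b c : ℝ) {f : (Fin 3 → ℝ) → ℝ} {x : Fin 3 → ℝ}
    (h : x ∉ tsupport f) : symCurl a b c f x = 0 ∧ airy f x = 0 := by
  have h1 := fun k => pd_eq_zero h k
  have h2 := fun k l => pd_eq_zero (notMem_tsupport_pd h k) l
  constructor <;> ext i j <;> fin_cases i <;> fin_cases j <;> simp [symCurl, airy, h1, h2]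

theorem tsupport_tensors (a b c : ℝ) (f : (Fin 3 → ℝ) → ℝ) (i j : Fin 3) :
    tsupport (fun x => symCurl a b c f x i j) ⊆ tsupport f ∧
    tsupport (fun x => airy f x i j) ⊆ tsupport f := by
  constructor <;> refine closure_minimal (fun x hx => ?_) (isClosed_tsupport f) <;>
    by_contra h <;> simp [tensors_eq_zero a b c h] at hx

/-! ### The moment integrand and its integral -/

/-- Where `u` agrees with `s x₁x₂x₃`, its Airy tensor is linear: only `τ₁₂ = τ₂₁ = -s x₃` is nonzero. -/
theorem airy_local {u : (Fin 3 → ℝ) → ℝ} {x : Fin 3 → ℝ} {s : ℝ}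
    (h : u =ᶠ[nhds x] fun y => s * (y 0 * y 1 * y 2)) :
    airy u =ᶠ[nhds x] fun y => !![0, -s * y 2, 0; -s * y 2, 0, 0; 0, 0, 0] := by
  have h0 : ∀ k y, pd k (fun y => s * (y 0 * y 1 * y 2)) y =
      s * ((Pi.single k 1 : Fin 3 → ℝ) 0 * (y 1 * y 2) +
        (Pi.single k 1 : Fin 3 → ℝ) 1 * (y 0 * y 2) +
        (Pi.single k 1 : Fin 3 → ℝ) 2 * (y 0 * y 1)) := by
    intro k y
    have := fun j => ((ContinuousLinearMap.proj (R := ℝ) (φ := fun _ : Fin 3 => ℝ) j).hasFDerivAt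
      (x := y))
    have := ((((this 0).mul (this 1)).mul (this 2)).const_mul s).fderiv
    simp only [ContinuousLinearMap.proj_apply] at this
    refine (congrArg (fun L => L (Pi.single k 1)) this).trans ?_
    simp
    ring
  have hk := fun k => (pd_eventuallyEq h k).trans (Filter.EventuallyEq.of_eq (funext (h0 k)))
  have h2 : ∀ k i j y, pd k (fun y => s * (y i * y j)) y =
      s * ((Pi.single k 1 : Fin 3 → ℝ) i * y j + (Pi.single k 1 : Fin 3 → ℝ) j * y i) := by
    intro k i j y
    have := fun j => ((ContinuousLinearMap.proj (R := ℝ) (φ := fun _ : Fin 3 => ℝ) j).hasFDerivAt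
      (x := y))
    have := (((this i).mul (this j)).const_mul s).fderiv
    simp only [ContinuousLinearMap.proj_apply] at this
    refine (congrArg (fun L => L (Pi.single k 1)) this).trans ?_
    simp
    ring
  have e0 : pd 0 u =ᶠ[nhds x] fun y => s * (y 1 * y 2) := by
    simpa using hk 0
  have e1 : pd 1 u =ᶠ[nhds x] fun y => s * (y 0 * y 2) := by
    simpa using hk 1
  filter_upwards [pd_eventuallyEq e0 0, pd_eventuallyEq e1 0, pd_eventuallyEq e1 1]
    with y h00 h01 h11
  simp [airy, h00, h01, h11, h2]

/-- The moment integrand at a point near which `τ` is the linear tensor of `airy_local`. The sign `s`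
of `τ` is absorbed into `∂g = s ∂f`; what remains is a constant-coefficient combination of the
functions `x_j ∂_i g`, listed for `k = 1, 2, 3`. -/
theorem moment_integrand (a b c : ℝ) {f u g : (Fin 3 → ℝ) → ℝ} {x : Fin 3 → ℝ} {s : ℝ}
    (h : airy u =ᶠ[nhds x] fun y => !![0, -s * y 2, 0; -s * y 2, 0, 0; 0, 0, 0])
    (hg : ∀ k, pd k g x = s * pd k f x) (k : Fin 3) :
    ∑ i, ∑ j, ∑ l,
          ((1 / 2) * pd l (fun y => airy u y i j) x * rotY k x l
            + airy u x i l * pd j (fun y => rotY k y l) x) * symCurl a b c f x i j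
     = ![-(a * (x 1 * pd 1 g x)) + b * (x 1 * pd 0 g x)
          + c * (x 2 * pd 0 g x) - a * (x 2 * pd 2 g x),
         a * (x 0 * pd 1 g x) - b * (x 0 * pd 0 g x)
          - b * (x 2 * pd 2 g x) + c * (x 2 * pd 1 g x),
         4 * c * (x 2 * pd 2 g x) - 2 * a * (x 2 * pd 0 g x) - 2 * b * (x 2 * pd 1 g x)] k := by
  have e : ∀ i j l, pd l (fun y => airy u y i j) x =
      (!![0, -s, 0; -s, 0, 0; 0, 0, 0] : Matrix (Fin 3) (Fin 3) ℝ) i j *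
        (Pi.single l 1 : Fin 3 → ℝ) 2 := by
    intro i j l
    refine (pd_eventuallyEq (h.fun_comp (fun M => M i j)) l).self_of_nhds.trans ?_
    simp only [Function.comp_def]
    have h3 : ∀ r, pd l (fun y : Fin 3 → ℝ => r * y 2) x = r * (Pi.single l 1 : Fin 3 → ℝ) 2 :=
      fun r => pd_linear (r • LinearMap.proj 2) l x
    have h4 := h3 (-s)
    fin_cases i <;> fin_cases j <;> simp [pd_fun_zero] <;>
      simpa using h4
  have e0 := h.self_of_nhds
  simp only [e, e0, pd_rotY, Fin.sum_univ_three, hg]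
  fin_cases k <;> simp [rotY, crossProduct, symCurl] <;> ring

/-- By `integral_coord_mul_pd` only the terms `x_i ∂_i g` of `moment_integrand` contribute, which
makes the three moments a diagonal linear function of `(a, b, c)`. -/
theorem moments {g : (Fin 3 → ℝ) → ℝ} (hg : ContDiff ℝ (⊤ : ℕ∞) g)
    (hc : HasCompactSupport g) (a b c : ℝ) (k : Fin 3) :
    ∫ x : Fin 3 → ℝ, ![-(a * (x 1 * pd 1 g x)) + b * (x 1 * pd 0 g x)
          + c * (x 2 * pd 0 g x) - a * (x 2 * pd 2 g x),
         a * (x 0 * pd 1 g x) - b * (x 0 * pd 0 g x)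
          - b * (x 2 * pd 2 g x) + c * (x 2 * pd 1 g x),
         4 * c * (x 2 * pd 2 g x) - 2 * a * (x 2 * pd 0 g x) - 2 * b * (x 2 * pd 1 g x)] k
      = ![2 * a, 2 * b, -(4 * c)] k * ∫ x, g x := by
  have H : ∀ (r : ℝ) (i j : Fin 3), Integrable (fun x : Fin 3 → ℝ => r * (x j * pd i g x)) :=
    fun r i j => (integrable_coord_mul_pd hg hc i j).const_mul r
  fin_cases k <;> simp only [Fin.zero_eta, Fin.mk_one, Fin.reduceFinMk, Matrix.cons_val]
  · rw [integral_sub (by fun_prop) (H _ _ _), integral_add (by fun_prop) (H _ _ _),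
      integral_add (by fun_prop) (H _ _ _), integral_neg]
    simp only [integral_const_mul, integral_coord_mul_pd hg hc]
    simp
    ring
  · rw [integral_add (by fun_prop) (H _ _ _), integral_sub (by fun_prop) (H _ _ _),
      integral_sub (H _ _ _) (H _ _ _)]
    simp only [integral_const_mul, integral_coord_mul_pd hg hc]
    simp
    ring
  · rw [integral_sub (by fun_prop) (H _ _ _), integral_sub (H _ _ _) (H _ _ _)]
    simp only [integral_const_mul, integral_coord_mul_pd hg hc]
    simp

/-! ### Bumps in a pair of antipodal cubes -/

/-- The cubes (sup-norm balls) of radius `r` around `(0, 0, 3/2)` and `(0, 0, -3/2)`. -/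
def cubes (r : ℝ) : Set (Fin 3 → ℝ) :=
  Metric.closedBall ![0, 0, 3 / 2] r ∪ -Metric.closedBall ![0, 0, 3 / 2] r

theorem isCompact_cubes (r : ℝ) : IsCompact (cubes r) :=
  (isCompact_closedBall _ _).union (isCompact_closedBall _ _).neg

theorem mem_cube {x : Fin 3 → ℝ} {r : ℝ} (h : x ∈ Metric.closedBall ![0, 0, 3 / 2] r) :
    |x 0| ≤ r ∧ |x 1| ≤ r ∧ |x 2 - 3 / 2| ≤ r := by
  have := fun i => (dist_le_pi_dist x ![0, 0, 3 / 2] i).trans h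
  refine ⟨?_, ?_, ?_⟩
  · simpa [Real.dist_eq] using this 0
  · simpa [Real.dist_eq] using this 1
  · simpa [Real.dist_eq] using this 2

theorem cubes_subset : cubes (1 / 4) ⊆ annulusA₁ := by
  have key : ∀ x : Fin 3 → ℝ, x ∈ Metric.closedBall ![0, 0, 3 / 2] (1 / 4) →
      1 < ∑ i, x i ^ 2 ∧ ∑ i, x i ^ 2 < 4 := by
    intro x hx
    obtain ⟨h0, h1, h2⟩ := mem_cube hx
    rw [abs_le] at h0 h1 h2
    rw [Fin.sum_univ_three]
    constructor <;> nlinarith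
  have key2 : ∀ x : Fin 3 → ℝ, x ∈ cubes (1 / 4) → 1 < ∑ i, x i ^ 2 ∧ ∑ i, x i ^ 2 < 4 := by
    rintro x (hx | hx)
    · exact key x hx
    · simpa using key (-x) hx
  intro x hx
  obtain ⟨h1, h2⟩ := key2 x hx
  refine ⟨?_, ?_⟩
  · rw [Real.lt_sqrt (by norm_num)]; linarith
  · rw [Real.sqrt_lt' (by norm_num)]; linarith

/-- The reflected bump vanishes near every point of the upper half-space. -/
theorem bump_neg_eventually {x : Fin 3 → ℝ} (φ : ContDiffBump (![0, 0, 3 / 2] : Fin 3 → ℝ))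
    (hφ : φ.rOut ≤ 1 / 4) (hx : 0 < x 2) : ∀ᶠ y in nhds x, φ (-y) = 0 := by
  have : ∀ᶠ y : Fin 3 → ℝ in nhds x, 0 < y 2 :=
    (continuous_apply 2).continuousAt.eventually (lt_mem_nhds hx)
  filter_upwards [this] with y hy
  by_contra h
  have hs : -y ∈ Function.support φ := h
  rw [φ.support_eq] at hs
  have := (mem_cube (Metric.ball_subset_closedBall hs)).2.2
  rw [abs_le] at this
  simp at this
  linarith

/-- A function that vanishes wherever both the bump and its reflection vanish is supported in the
two cubes. -/
theorem bump_support {φ : ContDiffBump (![0, 0, 3 / 2] : Fin 3 → ℝ)} {r : ℝ}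
    (hφ : φ.rOut = r) {F : (Fin 3 → ℝ) → ℝ} (hF : ∀ x, φ x = 0 → φ (-x) = 0 → F x = 0) :
    tsupport F ⊆ cubes r := by
  refine closure_minimal (fun x hx => ?_) (isCompact_cubes r).isClosed
  by_contra h
  have h1 : ∀ y, y ∉ Metric.closedBall ![0, 0, 3 / 2] r → φ y = 0 := by
    intro y hy
    exact φ.zero_of_le_dist (by rw [hφ]; exact (not_le.mp hy).le)
  exact hx (hF x (h1 _ fun h' => h (Or.inl h')) (h1 _ fun h' => h (Or.inr h')))

/-! ### Prescribing the moments -/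

theorem compactly_supported_solutions_with_angular_momentum_moments
    (lam : Fin 3 → ℝ) :
    ∃ σ τ : (Fin 3 → ℝ) → Matrix (Fin 3) (Fin 3) ℝ,
      (∀ i j, ContDiff ℝ (⊤ : ℕ∞) fun x => σ x i j) ∧
      (∀ i j, ContDiff ℝ (⊤ : ℕ∞) fun x => τ x i j) ∧
      (∀ x, (σ x).IsSymm) ∧
      (∀ x, (τ x).IsSymm) ∧
      (∀ i j, tsupport (fun x => σ x i j) ⊆ annulusA₁) ∧
      (∀ i j, tsupport (fun x => τ x i j) ⊆ annulusA₁) ∧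
      (∀ x, σ (-x) = σ x) ∧
      (∀ x, τ (-x) = τ x) ∧
      -- linearized scalar curvature equation `L σ = 0`
      (∀ x, ∑ i, ∑ j,
        (pd i (fun y => pd j (fun z => σ z i j) y) x
          - pd j (fun y => pd j (fun z => σ z i i) y) x) = 0) ∧
      -- divergence-free equation `(div τ)_j = 0`
      (∀ j x, ∑ i, pd i (fun y => τ y i j) x = 0) ∧
      -- prescribed angular-momentum moments
      (∀ k, ∫ x in annulusA₁, ∑ i, ∑ j, ∑ l,
          ((1 / 2) * pd l (fun y => τ y i j) x * rotY k x l
            + τ x i l * pd j (fun y => rotY k y l) x) * σ x i j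
        = lam k) := by
  let φ : ContDiffBump (![0, 0, 3 / 2] : Fin 3 → ℝ) :=
    ⟨1 / 16, 1 / 8, by norm_num, by norm_num⟩
  let χ : ContDiffBump (![0, 0, 3 / 2] : Fin 3 → ℝ) :=
    ⟨3 / 16, 1 / 4, by norm_num, by norm_num⟩
  let f : (Fin 3 → ℝ) → ℝ := fun x => φ x - φ (-x)
  let g : (Fin 3 → ℝ) → ℝ := fun x => φ x + φ (-x)
  let u : (Fin 3 → ℝ) → ℝ := fun x => (χ x - χ (-x)) * (x 0 * x 1 * x 2)
  have hφ : ContDiff ℝ (⊤ : ℕ∞) φ := φ.contDiff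
  have hχ : ContDiff ℝ (⊤ : ℕ∞) χ := χ.contDiff
  have hφn : ContDiff ℝ (⊤ : ℕ∞) fun x => φ (-x) := hφ.comp contDiff_neg
  have hχn : ContDiff ℝ (⊤ : ℕ∞) fun x => χ (-x) := hχ.comp contDiff_neg
  have hf : ContDiff ℝ (⊤ : ℕ∞) f := hφ.sub hφn
  have hg : ContDiff ℝ (⊤ : ℕ∞) g := hφ.add hφn
  have hu : ContDiff ℝ (⊤ : ℕ∞) u := (hχ.sub hχn).mul (by fun_prop)
  have sf : tsupport f ⊆ cubes (1 / 8) := bump_support (φ := φ) rfl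
    (fun x h1 h2 => by simp [f, h1, h2])
  have sg : tsupport g ⊆ cubes (1 / 8) := bump_support (φ := φ) rfl
    (fun x h1 h2 => by simp [g, h1, h2])
  have su : tsupport u ⊆ cubes (1 / 4) := bump_support (φ := χ) rfl
    (fun x h1 h2 => by simp [u, h1, h2])
  have hcub : cubes (1 / 8) ⊆ cubes (1 / 4) := by
    have := Metric.closedBall_subset_closedBall (x := (![0, 0, 3 / 2] : Fin 3 → ℝ))
      (show (1 / 8 : ℝ) ≤ 1 / 4 by norm_num)
    exact Set.union_subset_union this (Set.neg_subset_neg.mpr this)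
  have cg : HasCompactSupport g := (isCompact_cubes _).of_isClosed_subset (isClosed_tsupport _) sg
  have fodd : ∀ x, f (-x) = -f x := fun x => by simp [f]
  have ueven : ∀ x, u (-x) = u x := fun x => by simp only [u, Pi.neg_apply, neg_neg]; ring
  have hI : 0 < ∫ x, g x := by
    refine hg.continuous.integral_pos_of_hasCompactSupport_nonneg_nonzero cg
      (fun x => add_nonneg φ.nonneg φ.nonneg) (x := ![0, 0, 3 / 2]) ?_
    have h1 := φ.pos_of_mem_ball (Metric.mem_ball_self φ.rOut_pos)
    exact (add_pos_of_pos_of_nonneg h1 φ.nonneg).ne'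
  have up : ∀ x ∈ Metric.closedBall ![0, 0, 3 / 2] (1 / 8),
      (∀ᶠ y in nhds x, φ (-y) = 0) ∧ (∀ᶠ y in nhds x, χ (-y) = 0) ∧
        ∀ᶠ y in nhds x, χ y = 1 := by
    intro x hx
    have hpos : 0 < x 2 := by
      have := (mem_cube hx).2.2
      rw [abs_le] at this
      linarith
    exact ⟨bump_neg_eventually φ (by norm_num [φ]) hpos,
      bump_neg_eventually χ (by norm_num [χ]) hpos,
      χ.eventuallyEq_one_of_mem_ball (Metric.closedBall_subset_ball (by norm_num [χ]) hx)⟩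
  -- On the supports of `f` and `g` the stress function is `± x₁x₂x₃`, with the sign relating `∂f`
  -- to `∂g`. The summand `0 * f y` puts the right-hand side in the shape required by `pd_lin`.
  have loc : ∀ x ∈ cubes (1 / 8), ∃ s : ℝ, (g =ᶠ[nhds x] fun y => s * f y + 0 * f y) ∧
      u =ᶠ[nhds x] fun y => s * (y 0 * y 1 * y 2) := by
    rintro x (hx | hx)
    · obtain ⟨h1, h2, h3⟩ := up x hx
      refine ⟨1, ?_, ?_⟩
      · filter_upwards [h1] with y h1
        simp [f, g, h1]
      · filter_upwards [h2, h3] with y h2 h3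
        simp [u, h2, h3]
    · obtain ⟨h1, h2, h3⟩ := up (-x) hx
      have hneg : Filter.Tendsto (fun y : Fin 3 → ℝ => -y) (nhds x) (nhds (-x)) :=
        continuous_neg.continuousAt
      refine ⟨-1, ?_, ?_⟩
      · filter_upwards [hneg.eventually h1] with y h1
        rw [neg_neg] at h1
        simp [f, g, h1]
      · filter_upwards [hneg.eventually h2, hneg.eventually h3] with y h2 h3
        rw [neg_neg] at h2
        simp [u, h2, h3]
  set I := ∫ x, g x with hIdef
  -- The inverse of the diagonal map in `moments`.
  let a := lam 0 / (2 * I)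
  let b := lam 1 / (2 * I)
  let c := -(lam 2 / (4 * I))
  refine ⟨symCurl a b c f, airy u, fun i j => (contDiff_tensors a b c hf hu i j).1,
    fun i j => (contDiff_tensors a b c hf hu i j).2, ?_, ?_,
    fun i j => ((tsupport_tensors a b c f i j).1.trans sf).trans (hcub.trans cubes_subset),
    fun i j => ((tsupport_tensors a b c u i j).2.trans su).trans cubes_subset,
    ?_, ?_, symCurl_linearizedScalar a b c hf, airy_div hu, ?_⟩
  · intro x
    ext i j
    fin_cases i <;> fin_cases j <;> rfl
  · intro x
    ext i j
    fin_cases i <;> fin_cases j <;> rfl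
  · intro x
    simp only [symCurl, pd_even fodd]
  · intro x
    simp only [airy, pd_even (pd_odd ueven _)]
  · intro k
    rw [setIntegral_eq_integral_of_forall_compl_eq_zero]
    · refine Eq.trans (integral_congr_ae (Filter.Eventually.of_forall fun x => ?_))
        ((moments hg cg a b c k).trans ?_)
      · by_cases hx : x ∈ cubes (1 / 8)
        · obtain ⟨s, h1, h2⟩ := loc x hx
          refine moment_integrand a b c (airy_local h2) (fun k => ?_) k
          rw [(pd_eventuallyEq h1 k).self_of_nhds, pd_lin hf hf]
          ring
        · simp only [(tensors_eq_zero a b c fun h => hx (sf h)).1,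
            fun k => pd_eq_zero (fun h => hx (sg h)) k]
          fin_cases k <;> simp
      · rw [← hIdef]
        have : I ≠ 0 := hI.ne'
        fin_cases k <;> simp [a, b, c] <;> field_simp
    · intro x hx
      have : x ∉ tsupport f := fun h => hx (cubes_subset (hcub (sf h)))
      simp [(tensors_eq_zero a b c this).1]
end

section
/- (Lemma 5.3 of the paper, a degree/surjectivity lemma.) Fix a constant a > 0 and a point z₀ ∈ ℝⁿ, and let B_a(z₀) denote the closed ball in ℝⁿ centered at z₀ with radius a. Let f : B_a(z₀) → ℝⁿ be a continuous map satisfying ‖f(z) − z‖ ≤ a for every z ∈ B_a(z₀). Then there exists z ∈ B_a(z₀) with f(z) = z₀; that is, the preimage f⁻¹(z₀) is non-empty. -/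
/-!
The map `x ↦ z₀ + (x - f x)` sends the ball to itself, so the claim is a form of Brouwer's fixed
point theorem. It is derived here from a surjectivity statement: if `h` is continuous with compact
support, then `x ↦ x + h x` is onto (`exists_add_eq_of_continuous`). Indeed `f - id` extends to a
compactly supported `h` of norm at most `a` everywhere, and `x + h x = z₀` then forces `‖x - z₀‖ ≤ a`.

For `h` of class `C¹` surjectivity is proved by an analytic argument in the style of Milnor and
Rogers. Put `F_t x = x + t • h x`, let `K` be a large ball centred at `p`, and let `w` be a function
of the form `α * (M - ‖y - p‖ ^ 2)`. For small `t > 0` the map `F_t` is an orientation preserving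
`C¹` bijection of `K`, so `∫_K w(F_t x)^N det F_t'(x) dx = ∫_K w^N`. The left side is a polynomial in
`t`, so the identity persists at `t = 1` (`setIntegral_weight_comp`). If `F_1` missed `p`, one could
choose `w ≥ 0` on `K` with `0 ≤ w ≤ 1` on `F_1(K)` and `w ≥ β > 1` near `p`: then the left side stays bounded
as `N → ∞` while the right side grows at least like `β ^ N`.

Continuous `h` are handled by uniform smooth approximation and compactness.
-/

open MeasureTheory Polynomial Metric Set Filter Topology

/-! ### Integrals depending polynomially on a parameter -/

/-- If `G t x` is, for each `x`, a polynomial in `t` of degree bounded uniformly in `x`, and its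
integral over `x` is the same for all small `t > 0`, then it is the same for all `t`: by Lagrange
interpolation the integral at `t` is a fixed affine combination of integrals at small nodes. -/
lemma integral_eq_of_polynomial {X : Type*} [MeasurableSpace X] (μ : Measure X)
    (G : ℝ → X → ℝ) (D : ℕ) (c δ : ℝ) (hδ : 0 < δ)
    (hpoly : ∀ x, ∃ P : ℝ[X], P.natDegree ≤ D ∧ ∀ t, P.eval t = G t x)
    (hint : ∀ t, Integrable (G t) μ)
    (hc : ∀ t, 0 < t → t < δ → ∫ x, G t x ∂μ = c) (t : ℝ) : ∫ x, G t x ∂μ = c := by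
  let v : ℕ → ℝ := fun i => δ / (i + 2)
  have hv : Set.InjOn v (Finset.range (D + 1)) := by
    intro i _ j _ hij
    have hi : (0 : ℝ) < i + 2 := by positivity
    have hj : (0 : ℝ) < j + 2 := by positivity
    simp only [v] at hij
    rw [div_eq_div_iff hi.ne' hj.ne'] at hij
    have := mul_left_cancel₀ hδ.ne' hij
    exact_mod_cast (by linarith : (i : ℝ) = j)
  let L : ℕ → ℝ := fun i => (Lagrange.basis (Finset.range (D + 1)) v i).eval t
  have hL : ∑ i ∈ Finset.range (D + 1), L i = 1 := by
    have := congrArg (Polynomial.eval t) (Lagrange.sum_basis hv ⟨0, by simp⟩)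
    simpa [Polynomial.eval_finsetSum] using this
  have hG : ∀ x, G t x = ∑ i ∈ Finset.range (D + 1), L i * G (v i) x := by
    intro x
    obtain ⟨P, hP, hPe⟩ := hpoly x
    have hdeg : P.degree < (Finset.range (D + 1)).card := by
      rw [Finset.card_range]
      refine (Polynomial.degree_le_natDegree).trans_lt ?_
      exact_mod_cast Nat.lt_succ_of_le hP
    have h := congrArg (Polynomial.eval t) (Lagrange.eq_interpolate hv hdeg)
    rw [Lagrange.interpolate_apply, Polynomial.eval_finsetSum, hPe] at h
    rw [h]
    refine Finset.sum_congr rfl fun i _ => ?_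
    rw [Polynomial.eval_mul, Polynomial.eval_C, hPe, mul_comm]
  simp_rw [hG]
  rw [integral_finsetSum _ fun i _ => (hint _).const_mul _]
  have : ∀ i ∈ Finset.range (D + 1), ∫ x, L i * G (v i) x ∂μ = L i * c := by
    intro i _
    have hi : (0 : ℝ) ≤ i := by positivity
    rw [integral_const_mul, hc]
    · positivity
    · exact div_lt_self hδ (by linarith)
  rw [Finset.sum_congr rfl this, ← Finset.sum_mul, hL, one_mul]

variable {n : ℕ}

local notation "𝔼" => EuclideanSpace ℝ (Fin n)

lemma exists_polynomial_det (A : 𝔼 →L[ℝ] 𝔼) :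
    ∃ P : ℝ[X], P.natDegree ≤ n ∧
      ∀ t, P.eval t = (ContinuousLinearMap.id ℝ 𝔼 + t • A).det := by
  let b := (EuclideanSpace.basisFun (Fin n) ℝ).toBasis
  let M := LinearMap.toMatrix b b (A : 𝔼 →ₗ[ℝ] 𝔼)
  refine ⟨((X : ℝ[X]) • M.map C + (1 : Matrix (Fin n) (Fin n) ℝ).map C).det, ?_, fun t => ?_⟩
  · simpa using natDegree_det_X_add_C_le M 1
  · rw [ContinuousLinearMap.det, ← LinearMap.det_toMatrix b, ← Polynomial.coe_evalRingHom,
      RingHom.map_det]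
    congr 1
    ext i j
    have h1 : M i j = b.repr (A (b j)) i := by simp [M, LinearMap.toMatrix_apply]
    have h2 : LinearMap.toMatrix b b
        ((ContinuousLinearMap.id ℝ 𝔼 + t • A : 𝔼 →L[ℝ] 𝔼) : 𝔼 →ₗ[ℝ] 𝔼) i j
        = (1 : Matrix (Fin n) (Fin n) ℝ) i j + t * b.repr (A (b j)) i := by
      simp [LinearMap.toMatrix_apply, Matrix.one_apply, Finsupp.single_apply, eq_comm]
    rw [h2, ← h1]
    by_cases hij : i = j <;> simp [Matrix.one_apply, hij] <;> ring

lemma exists_polynomial_weight (x u p : 𝔼) (α M : ℝ) (N : ℕ) :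
    ∃ P : ℝ[X], P.natDegree ≤ 2 * N ∧
      ∀ t, P.eval t = (α * (M - ‖x + t • u - p‖ ^ 2)) ^ N := by
  let Q : ℝ[X] := C (-α * ‖u‖ ^ 2) * X ^ 2 + C (-α * (2 * inner ℝ (x - p) u)) * X
    + C (α * (M - ‖x - p‖ ^ 2))
  refine ⟨Q ^ N, ?_, fun t => ?_⟩
  · refine natDegree_pow_le.trans ?_
    rw [mul_comm]
    exact Nat.mul_le_mul_right _ natDegree_quadratic_le
  · have : x + t • u - p = (x - p) + t • u := by abel
    rw [this, norm_add_sq_real, inner_smul_right, norm_smul, mul_pow ‖t‖, Real.norm_eq_abs, sq_abs]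
    simp only [Q, eval_pow, eval_add, eval_mul, eval_C, eval_X]
    ring

/-! ### Change of variables for compactly supported perturbations of the identity -/

/-- A small multiple of a compactly supported `C¹` map perturbs the identity to an orientation
preserving bijection. -/
lemma exists_small_perturbation {h : 𝔼 → 𝔼} (hh : ContDiff ℝ 1 h) (hs : HasCompactSupport h) :
    ∃ δ > 0, ∀ t : ℝ, 0 < t → t < δ → Function.Bijective (fun x => x + t • h x) ∧
      ∀ x, 0 < (ContinuousLinearMap.id ℝ 𝔼 + t • fderiv ℝ h x).det := by
  obtain ⟨C, hC⟩ := ContDiff.lipschitzWith_of_hasCompactSupport hs hh one_ne_zero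
  obtain ⟨ε, hε, hdet⟩ : ∃ ε > 0, ∀ B : 𝔼 →L[ℝ] 𝔼,
      dist B (ContinuousLinearMap.id ℝ 𝔼) < ε → 0 < B.det := by
    have h1 : (ContinuousLinearMap.id ℝ 𝔼).det = 1 := LinearMap.det_id
    exact Metric.eventually_nhds_iff.1
      ((ContinuousLinearMap.continuous_det (𝕜 := ℝ) (E := 𝔼)).continuousAt.eventually
        (lt_mem_nhds (one_pos.trans_eq h1.symm)))
  have hC1 : (0 : ℝ) < C + 1 := by positivity
  refine ⟨min 1 ε / (C + 1), by positivity, fun t ht htδ => ?_⟩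
  rw [lt_div_iff₀ hC1] at htδ
  have ht1 : t * C < 1 := by nlinarith [min_le_left 1 ε]
  have htε : t * C < ε := by nlinarith [min_le_right 1 ε]
  constructor
  · have happ : ApproximatesLinearOn (fun x => x + t • h x)
        ((ContinuousLinearEquiv.refl ℝ 𝔼 : 𝔼 ≃L[ℝ] 𝔼) : 𝔼 →L[ℝ] 𝔼) univ
        (t.toNNReal * C) := by
      intro x _ y _
      have : x + t • h x - (y + t • h y) -
          ((ContinuousLinearEquiv.refl ℝ 𝔼 : 𝔼 ≃L[ℝ] 𝔼) : 𝔼 →L[ℝ] 𝔼) (x - y)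
          = t • (h x - h y) := by
        simp only [ContinuousLinearEquiv.coe_refl, ContinuousLinearMap.id_apply, smul_sub]
        abel
      rw [this, norm_smul, Real.norm_of_nonneg ht.le]
      have h2 := hC.norm_sub_le x y
      calc t * ‖h x - h y‖ ≤ t * (C * ‖x - y‖) := by gcongr
        _ = _ := by rw [NNReal.coe_mul, Real.coe_toNNReal t ht.le, mul_assoc]
    have hc : Subsingleton 𝔼 ∨ (t.toNNReal * C : NNReal) <
        ‖((ContinuousLinearEquiv.refl ℝ 𝔼 : 𝔼 ≃L[ℝ] 𝔼).symm : 𝔼 →L[ℝ] 𝔼)‖₊⁻¹ := by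
      rcases subsingleton_or_nontrivial 𝔼 with hE | hE
      · exact Or.inl hE
      · right
        have : ‖((ContinuousLinearEquiv.refl ℝ 𝔼 : 𝔼 ≃L[ℝ] 𝔼).symm : 𝔼 →L[ℝ] 𝔼)‖₊ = 1 := by
          ext; simp
        rw [this, inv_one, ← NNReal.coe_lt_coe]
        rwa [NNReal.coe_mul, Real.coe_toNNReal t ht.le, NNReal.coe_one]
    exact ⟨injOn_univ.1 (happ.injOn hc), happ.surjective hc⟩
  · intro x
    apply hdet
    rw [dist_eq_norm, add_sub_cancel_left, norm_smul, Real.norm_of_nonneg ht.le]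
    have := norm_fderiv_le_of_lipschitz ℝ hC (x₀ := x)
    exact (mul_le_mul_of_nonneg_left this ht.le).trans_lt htε

/-- The change of variables formula with signed Jacobian for `x ↦ x + h x`, tested against powers
of a quadratic centred at the centre of a ball that contains the support of `h`. -/
lemma setIntegral_weight_comp {h : 𝔼 → 𝔼} (hh : ContDiff ℝ 1 h) (p : 𝔼) (R : ℝ)
    (hR : ∀ x ∉ closedBall p R, h x = 0) (hs : HasCompactSupport h) (α M : ℝ) (N : ℕ) :
    ∫ x in closedBall p R, (α * (M - ‖x + h x - p‖ ^ 2)) ^ N *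
        (ContinuousLinearMap.id ℝ 𝔼 + fderiv ℝ h x).det
      = ∫ x in closedBall p R, (α * (M - ‖x - p‖ ^ 2)) ^ N := by
  obtain ⟨δ, hδ, hsmall⟩ := exists_small_perturbation hh hs
  have hcf := hh.continuous_fderiv one_ne_zero
  have hch := hh.continuous
  have key := integral_eq_of_polynomial (volume.restrict (closedBall p R))
    (fun t x => (α * (M - ‖x + t • h x - p‖ ^ 2)) ^ N *
        (ContinuousLinearMap.id ℝ 𝔼 + t • fderiv ℝ h x).det) (2 * N + n)
    (∫ x in closedBall p R, (α * (M - ‖x - p‖ ^ 2)) ^ N) δ hδ ?_ ?_ ?_ 1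
  · simpa using key
  · intro x
    obtain ⟨P, hP, hPe⟩ := exists_polynomial_weight x (h x) p α M N
    obtain ⟨Q, hQ, hQe⟩ := exists_polynomial_det (fderiv ℝ h x)
    exact ⟨P * Q, natDegree_mul_le.trans (add_le_add hP hQ), fun t => by
      rw [eval_mul, hPe, hQe]⟩
  · intro t
    have hd : Continuous fun x => (ContinuousLinearMap.id ℝ 𝔼 + t • fderiv ℝ h x).det :=
      ContinuousLinearMap.continuous_det.comp (by fun_prop)
    have hG : Continuous fun x => (α * (M - ‖x + t • h x - p‖ ^ 2)) ^ N *
        (ContinuousLinearMap.id ℝ 𝔼 + t • fderiv ℝ h x).det := by fun_prop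
    exact hG.continuousOn.integrableOn_compact (isCompact_closedBall p R)
  · intro t ht htδ
    obtain ⟨⟨hinj, hsurj⟩, hdet⟩ := hsmall t ht htδ
    have himg : (fun x => x + t • h x) '' closedBall p R = closedBall p R := by
      apply Subset.antisymm
      · rintro _ ⟨x, hx, rfl⟩
        by_contra hy
        -- a point outside the ball is fixed, so `F_t (F_t x) = F_t x`, whence `F_t x = x`
        have h1 := hinj (a₁ := x + t • h x) (a₂ := x) (by simp [hR _ hy])
        exact hy (by simpa only [h1] using hx)
      · intro y hy
        obtain ⟨x, rfl⟩ := hsurj y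
        refine ⟨x, ?_, rfl⟩
        by_contra hx
        simp [hR x hx] at hy
        exact hx (by simpa using hy)
    have hcv := integral_image_eq_integral_abs_det_fderiv_smul volume
      (s := closedBall p R) (f := fun x => x + t • h x)
      (f' := fun x => ContinuousLinearMap.id ℝ 𝔼 + t • fderiv ℝ h x)
      isClosed_closedBall.measurableSet
      (fun x _ => ((hasFDerivAt_id x).add
        (((hh.differentiable one_ne_zero x).hasFDerivAt).const_smul t)).hasFDerivWithinAt)
      hinj.injOn (fun y => (α * (M - ‖y - p‖ ^ 2)) ^ N)
    rw [himg] at hcv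
    rw [hcv]
    refine integral_congr_ae (ae_of_all _ fun x => ?_)
    simp only [smul_eq_mul]
    rw [abs_of_pos (hdet x), mul_comm]

/-! ### Surjectivity and the degree lemma -/

lemma exists_add_eq_of_contDiff {h : 𝔼 → 𝔼} (hh : ContDiff ℝ 1 h) (hs : HasCompactSupport h)
    (p : 𝔼) : ∃ x, x + h x = p := by
  by_contra! hne
  have hch := hh.continuous
  obtain ⟨R, hR0, hR⟩ : ∃ R > 0, ∀ x ∉ closedBall p R, h x = 0 := by
    obtain ⟨R, hR⟩ := hs.isCompact.isBounded.subset_closedBall p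
    refine ⟨max R 1, by positivity, fun x hx => ?_⟩
    by_contra hx0
    exact hx (closedBall_subset_closedBall (le_max_left _ _)
      (hR (subset_tsupport _ hx0)))
  set K := closedBall p R with hK
  have hKc : IsCompact K := isCompact_closedBall p R
  have hKm : MeasurableSet K := isClosed_closedBall.measurableSet
  have hKne : K.Nonempty := ⟨p, mem_closedBall_self hR0.le⟩
  have hcn : Continuous fun x => ‖x + h x - p‖ := by fun_prop
  obtain ⟨ε, hε, hεR, hlow⟩ : ∃ ε > 0, ε ≤ R ∧ ∀ x ∈ K, ε ≤ ‖x + h x - p‖ := by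
    obtain ⟨x₀, _, hmin⟩ := hKc.exists_isMinOn hKne hcn.continuousOn
    have hpos : 0 < ‖x₀ + h x₀ - p‖ := norm_pos_iff.2 (sub_ne_zero.2 (hne x₀))
    exact ⟨min ‖x₀ + h x₀ - p‖ R, by positivity, min_le_right _ _,
      fun x hx => (min_le_left _ _).trans (hmin hx)⟩
  obtain ⟨S, hS⟩ : ∃ S, ∀ x ∈ K, ‖x + h x - p‖ ≤ S := by
    obtain ⟨x₀, _, hmax⟩ := hKc.exists_isMaxOn hKne hcn.continuousOn
    exact ⟨_, fun x hx => hmax hx⟩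
  have hcd : Continuous fun x => (ContinuousLinearMap.id ℝ 𝔼 + fderiv ℝ h x).det :=
    ContinuousLinearMap.continuous_det.comp
      (continuous_const.add (hh.continuous_fderiv one_ne_zero))
  obtain ⟨J, hJ⟩ : ∃ J, ∀ x ∈ K, |(ContinuousLinearMap.id ℝ 𝔼 + fderiv ℝ h x).det| ≤ J := by
    obtain ⟨x₀, _, hmax⟩ := hKc.exists_isMaxOn hKne hcd.abs.continuousOn
    exact ⟨_, fun x hx => hmax hx⟩
  -- `M` exceeds `‖y - p‖ ^ 2` on `K` and on its image, and `α` normalises the weight to be `1` at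
  -- distance `ε` from `p`
  set M : ℝ := S ^ 2 + R ^ 2 + 1 with hM
  have hMε : 0 < M - ε ^ 2 := by nlinarith [sq_nonneg S]
  set α : ℝ := (M - ε ^ 2)⁻¹ with hα
  have hα0 : 0 < α := inv_pos.2 hMε
  have hα1 : α * (M - ε ^ 2) = 1 := inv_mul_cancel₀ hMε.ne'
  set β : ℝ := α * (M - (ε / 2) ^ 2) with hβ
  have hβ1 : 1 < β := by
    rw [← hα1, hβ]
    exact mul_lt_mul_of_pos_left (by nlinarith) hα0
  set V := volume.real (ball p (ε / 2)) with hV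
  have hV0 : 0 < V := by
    rw [hV, measureReal_def]
    exact ENNReal.toReal_pos (measure_ball_pos _ _ (by positivity)).ne' measure_ball_lt_top.ne
  have hsub : ball p (ε / 2) ⊆ K :=
    ball_subset_closedBall.trans (closedBall_subset_closedBall (by linarith))
  have hbound : ∀ N : ℕ, β ^ N * V ≤ J * volume.real K := by
    intro N
    have hw : Continuous fun x : 𝔼 => (α * (M - ‖x - p‖ ^ 2)) ^ N := by fun_prop
    have hwi : IntegrableOn (fun x : 𝔼 => (α * (M - ‖x - p‖ ^ 2)) ^ N) K :=
      hw.continuousOn.integrableOn_compact hKc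
    have h1 : β ^ N * V ≤ ∫ x in ball p (ε / 2), (α * (M - ‖x - p‖ ^ 2)) ^ N := by
      have : ∫ _ in ball p (ε / 2), β ^ N ≤ ∫ x in ball p (ε / 2), (α * (M - ‖x - p‖ ^ 2)) ^ N := by
        refine setIntegral_mono_on (integrableOn_const measure_ball_lt_top.ne) (hwi.mono_set hsub)
          measurableSet_ball fun x hx => ?_
        rw [mem_ball, dist_eq_norm] at hx
        have : 0 ≤ β := by linarith
        rw [hβ] at this ⊢
        gcongr
      rw [setIntegral_const, smul_eq_mul, mul_comm] at this
      exact this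
    have h2 : ∫ x in ball p (ε / 2), (α * (M - ‖x - p‖ ^ 2)) ^ N
        ≤ ∫ x in K, (α * (M - ‖x - p‖ ^ 2)) ^ N := by
      refine setIntegral_mono_set hwi ?_ (LE.le.eventuallyLE hsub)
      refine (ae_restrict_iff' hKm).2 (ae_of_all _ fun x hx => ?_)
      rw [hK, mem_closedBall, dist_eq_norm] at hx
      have : ‖x - p‖ ^ 2 ≤ R ^ 2 := by gcongr
      have : 0 ≤ M - ‖x - p‖ ^ 2 := by nlinarith [sq_nonneg S]
      simp only [Pi.zero_apply]
      positivity
    rw [← setIntegral_weight_comp hh p R hR hs α M N] at h2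
    have h3 := norm_setIntegral_le_of_norm_le_const (μ := volume) (s := K) (C := J)
      (f := fun x => (α * (M - ‖x + h x - p‖ ^ 2)) ^ N *
        (ContinuousLinearMap.id ℝ 𝔼 + fderiv ℝ h x).det) hKc.measure_lt_top (fun x hx => by
          have ha : ‖x + h x - p‖ ^ 2 ≤ S ^ 2 := by gcongr; exact hS x hx
          have hb : ε ^ 2 ≤ ‖x + h x - p‖ ^ 2 := by gcongr; exact hlow x hx
          have hc : 0 ≤ α * (M - ‖x + h x - p‖ ^ 2) :=
            mul_nonneg hα0.le (by nlinarith [sq_nonneg R])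
          have hd : α * (M - ‖x + h x - p‖ ^ 2) ≤ 1 := by
            rw [← hα1]; gcongr
          rw [norm_mul, Real.norm_of_nonneg (pow_nonneg hc N), Real.norm_eq_abs]
          calc _ ≤ 1 * |(ContinuousLinearMap.id ℝ 𝔼 + fderiv ℝ h x).det| := by
                gcongr; exact pow_le_one₀ hc hd
            _ ≤ J := by rw [one_mul]; exact hJ x hx)
    exact h1.trans (h2.trans ((le_abs_self _).trans h3))
  obtain ⟨N, hN⟩ := pow_unbounded_of_one_lt (J * volume.real K / V) hβ1
  rw [div_lt_iff₀ hV0] at hN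
  exact (hbound N).not_gt hN

lemma exists_add_eq_of_continuous {h : 𝔼 → 𝔼} (hh : Continuous h) (hs : HasCompactSupport h)
    (p : 𝔼) : ∃ x, x + h x = p := by
  have happrox : ∀ k : ℕ, ∃ x, ‖x + h x - p‖ ≤ 1 / ((k : ℝ) + 1) := by
    intro k
    obtain ⟨g, hg, hgh, hsupp⟩ := hh.exists_contDiff_approx 1
      (ε := fun _ => 1 / ((k : ℝ) + 1)) continuous_const (fun _ => by positivity)
    obtain ⟨x, hx⟩ := exists_add_eq_of_contDiff (by exact_mod_cast hg) (hs.mono hsupp) p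
    refine ⟨x, ?_⟩
    have := (hgh x).le
    rw [dist_comm, dist_eq_norm] at this
    rwa [← hx, add_sub_add_left_eq_sub]
  choose x hx using happrox
  have h0 : Tendsto (fun k => x k + h (x k)) atTop (𝓝 p) := by
    rw [tendsto_iff_norm_sub_tendsto_zero]
    exact squeeze_zero (fun _ => norm_nonneg _) hx tendsto_one_div_add_atTop_nhds_zero_nat
  obtain ⟨C, hC⟩ := hh.bounded_above_of_compact_support hs
  have hbd : ∀ k, x k ∈ closedBall p (1 + C) := by
    intro k
    rw [mem_closedBall, dist_eq_norm]
    have h1 : x k - p = (x k + h (x k) - p) - h (x k) := by abel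
    have h2 : 1 / ((k : ℝ) + 1) ≤ 1 := by
      rw [div_le_one (by positivity)]
      linarith [(Nat.cast_nonneg k : (0 : ℝ) ≤ k)]
    rw [h1]
    exact (norm_sub_le _ _).trans (add_le_add ((hx k).trans h2) (hC _))
  obtain ⟨y, _, φ, hφ, hy⟩ := (isCompact_closedBall p (1 + C)).tendsto_subseq hbd
  refine ⟨y, tendsto_nhds_unique ?_ (h0.comp hφ.tendsto_atTop)⟩
  exact hy.add ((hh.tendsto y).comp hy)

theorem degree_lemma_preimage_nonempty
    (n : ℕ) (a : ℝ) (ha : 0 < a) (z₀ : EuclideanSpace ℝ (Fin n))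
    (f : EuclideanSpace ℝ (Fin n) → EuclideanSpace ℝ (Fin n))
    (hf : ContinuousOn f (Metric.closedBall z₀ a))
    (hfz : ∀ z ∈ Metric.closedBall z₀ a, ‖f z - z‖ ≤ a) :
    ∃ z ∈ Metric.closedBall z₀ a, f z = z₀ := by
  -- `r` is the radial retraction onto the ball, `χ` a cutoff equal to `1` on the ball
  let r : EuclideanSpace ℝ (Fin n) → EuclideanSpace ℝ (Fin n) :=
    fun x => z₀ + (a / max a ‖x - z₀‖) • (x - z₀)
  let χ : EuclideanSpace ℝ (Fin n) → ℝ := fun x => max 0 (min 1 (2 - ‖x - z₀‖ / a))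
  have hmax : ∀ x : EuclideanSpace ℝ (Fin n), 0 < max a ‖x - z₀‖ := fun x => lt_max_of_lt_left ha
  have hrc : Continuous r := by
    have : Continuous fun x : EuclideanSpace ℝ (Fin n) => a / max a ‖x - z₀‖ :=
      continuous_const.div (by fun_prop) fun x => (hmax x).ne'
    fun_prop
  have hrm : ∀ x, r x ∈ closedBall z₀ a := by
    intro x
    rw [mem_closedBall, dist_eq_norm]
    simp only [r, add_sub_cancel_left]
    rw [norm_smul, Real.norm_of_nonneg (div_nonneg ha.le (hmax x).le), div_mul_eq_mul_div,
      div_le_iff₀ (hmax x)]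
    gcongr
    exact le_max_right _ _
  have hrid : ∀ x ∈ closedBall z₀ a, r x = x := by
    intro x hx
    rw [mem_closedBall, dist_eq_norm] at hx
    simp [r, max_eq_left hx, div_self ha.ne']
  have hχc : Continuous χ := by fun_prop
  have hχ0 : ∀ x, 0 ≤ χ x := fun x => le_max_left _ _
  have hχ1 : ∀ x, χ x ≤ 1 := fun x => max_le zero_le_one (min_le_left _ _)
  have hχid : ∀ x ∈ closedBall z₀ a, χ x = 1 := by
    intro x hx
    rw [mem_closedBall, dist_eq_norm] at hx
    have : ‖x - z₀‖ / a ≤ 1 := (div_le_one ha).2 hx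
    simp only [χ]
    rw [min_eq_left (by linarith), max_eq_right zero_le_one]
  have hχs : ∀ x ∉ closedBall z₀ (2 * a), χ x = 0 := by
    intro x hx
    rw [mem_closedBall, dist_eq_norm, not_le] at hx
    have : 2 ≤ ‖x - z₀‖ / a := (le_div_iff₀ ha).2 hx.le
    exact max_eq_left ((min_le_right _ _).trans (by linarith))
  let h : EuclideanSpace ℝ (Fin n) → EuclideanSpace ℝ (Fin n) := fun x => χ x • (f (r x) - r x)
  have hhc : Continuous h := hχc.smul ((hf.comp_continuous hrc hrm).sub hrc)
  have hhs : HasCompactSupport h :=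
    HasCompactSupport.intro (isCompact_closedBall z₀ (2 * a)) fun x hx => by simp [h, hχs x hx]
  have hhb : ∀ x, ‖h x‖ ≤ a := by
    intro x
    simp only [h]
    rw [norm_smul, Real.norm_of_nonneg (hχ0 x)]
    calc χ x * ‖f (r x) - r x‖ ≤ 1 * a := by
          gcongr
          · exact hχ1 x
          · exact hfz _ (hrm x)
      _ = a := one_mul a
  obtain ⟨x, hx⟩ := exists_add_eq_of_continuous hhc hhs z₀
  have hxB : x ∈ closedBall z₀ a := by
    rw [mem_closedBall, dist_eq_norm, ← hx, sub_add_cancel_left, norm_neg]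
    exact hhb x
  refine ⟨x, hxB, ?_⟩
  simpa [h, hχid x hxB, hrid x hxB] using hx
end

section
/- (Pointwise identity (4.3) in the proof of Theorem A.) Let U ⊆ ℝ³ be open, let ḡ : U → Matrix (Fin 3) (Fin 3) ℝ be a smooth map with symmetric positive definite values, with inverse entries ḡⁱʲ and Christoffel symbols Γ̄ᵏ_{ij} = (1/2) Σ_m ḡᵏᵐ (∂_i ḡ_{jm} + ∂_j ḡ_{im} − ∂_m ḡ_{ij}), and let π̄ : U → Matrix (Fin 3) (Fin 3) ℝ be a smooth symmetric-matrix-valued map. Define the covariant derivative π̄_{il;j} = ∂_j π̄_{il} − Σ_m Γ̄ᵐ_{ji} π̄_{ml} − Σ_m Γ̄ᵐ_{jl} π̄_{im}, and for a smooth vector field Y on U define the one-form ω_l = Σ_i π̄_{il} Y_i with covariant derivative ω_{l;j} = ∂_j ω_l − Σ_m Γ̄ᵐ_{jl} ω_m. Assume Y is a Euclidean Killing field, i.e. ∂_i Y_j + ∂_j Y_i = 0 on U for all i,j, and assume the momentum constraint Σ_{l,j} ḡˡʲ π̄_{il;j} = 0 holds on U for every i. Then at every point of U, Σ_{l,j}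 ḡˡʲ ω_{l;j} = Σ_{i,l,j} (ḡˡʲ − δˡʲ) π̄_{il} ∂_j Y_i + Σ_{i,l,j,s} ḡˡʲ π̄_{il} Y_s Γ̄ⁱ_{js}. -/
/-- The Christoffel symbols `Γ̄ᵏ_{ij} = (1/2) Σ_m ḡᵏᵐ (∂_i ḡ_{jm} + ∂_j ḡ_{im} − ∂_m ḡ_{ij})`. -/
noncomputable def christoffel (g : (Fin 3 → ℝ) → Matrix (Fin 3) (Fin 3) ℝ)
    (k i j : Fin 3) (x : Fin 3 → ℝ) : ℝ :=
  (1 / 2) * ∑ m, (g x)⁻¹ k m *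
    (pd i (fun y => g y j m) x + pd j (fun y => g y i m) x - pd m (fun y => g y i j) x)

/-- The covariant derivative `π̄_{il;j} = ∂_j π̄_{il} − Σ_m Γ̄ᵐ_{ji} π̄_{ml} − Σ_m Γ̄ᵐ_{jl} π̄_{im}`. -/
noncomputable def covDerivPi (g π : (Fin 3 → ℝ) → Matrix (Fin 3) (Fin 3) ℝ)
    (i l j : Fin 3) (x : Fin 3 → ℝ) : ℝ :=
  pd j (fun y => π y i l) x
    - (∑ m, christoffel g m j i x * π x m l)
    - (∑ m, christoffel g m j l x * π x i m)

/-- The one-form `ω_l = Σ_i π̄_{il} Y_i`. -/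
noncomputable def omega (π : (Fin 3 → ℝ) → Matrix (Fin 3) (Fin 3) ℝ)
    (Y : (Fin 3 → ℝ) → (Fin 3 → ℝ)) (l : Fin 3) (x : Fin 3 → ℝ) : ℝ :=
  ∑ i, π x i l * Y x i

/-- The covariant derivative `ω_{l;j} = ∂_j ω_l − Σ_m Γ̄ᵐ_{jl} ω_m`. -/
noncomputable def covDerivOmega (g π : (Fin 3 → ℝ) → Matrix (Fin 3) (Fin 3) ℝ)
    (Y : (Fin 3 → ℝ) → (Fin 3 → ℝ)) (l j : Fin 3) (x : Fin 3 → ℝ) : ℝ :=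
  pd j (fun y => omega π Y l y) x - ∑ m, christoffel g m j l x * omega π Y m x

/-- The product rule for the contraction `ω_l = Σ_i π̄_{il} Y_i`, with `Y` differentiated by
coordinate partial derivatives and a Christoffel term making up the difference. -/
theorem covDerivOmega_eq (g π : (Fin 3 → ℝ) → Matrix (Fin 3) (Fin 3) ℝ)
    (Y : (Fin 3 → ℝ) → (Fin 3 → ℝ)) (x : Fin 3 → ℝ)
    (hπ : ∀ i j, DifferentiableAt ℝ (fun y => π y i j) x)
    (hY : ∀ i, DifferentiableAt ℝ (fun y => Y y i) x) (l j : Fin 3) :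
    covDerivOmega g π Y l j x
      = ∑ i, (covDerivPi g π i l j x * Y x i + π x i l * pd j (fun y => Y y i) x
          + ∑ s, π x i l * Y x s * christoffel g i j s x) := by
  have hprod : pd j (fun y => omega π Y l y) x
      = ∑ i, (π x i l * pd j (fun y => Y y i) x + Y x i * pd j (fun y => π y i l) x) := by
    simp only [pd, omega]
    rw [fderiv_fun_sum fun i _ => (hπ i l).fun_mul (hY i)]
    simp [fderiv_fun_mul (hπ _ l) (hY _)]
  rw [covDerivOmega, hprod]
  simp only [covDerivPi, omega, Fin.sum_univ_three]
  ring

theorem sum_symm_mul_antisymm_eq_zero (S A : Fin 3 → Fin 3 → ℝ)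
    (hS : ∀ i l, S i l = S l i) (hA : ∀ i l, A i l + A l i = 0) :
    ∑ i, ∑ l, S i l * A i l = 0 := by
  have hswap : ∑ i, ∑ l, S i l * A i l = ∑ i, ∑ l, -(S i l * A i l) := by
    rw [Finset.sum_comm]
    refine Finset.sum_congr rfl fun i _ => Finset.sum_congr rfl fun l _ => ?_
    rw [hS l i, eq_neg_of_add_eq_zero_left (hA l i), mul_neg]
  simp only [Finset.sum_neg_distrib] at hswap
  linarith

theorem pointwise_identity_for_angular_momentum
    (U : Set (Fin 3 → ℝ)) (hU : IsOpen U)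
    (g π : (Fin 3 → ℝ) → Matrix (Fin 3) (Fin 3) ℝ)
    (Y : (Fin 3 → ℝ) → (Fin 3 → ℝ))
    (hg : ∀ i j, ContDiffOn ℝ (⊤ : ℕ∞) (fun x => g x i j) U)
    (hπ : ∀ i j, ContDiffOn ℝ (⊤ : ℕ∞) (fun x => π x i j) U)
    (hY : ∀ l, ContDiffOn ℝ (⊤ : ℕ∞) (fun x => Y x l) U)
    (hgpos : ∀ x ∈ U, (g x).PosDef)
    (hgsymm : ∀ x ∈ U, (g x).IsSymm)
    (hπsymm : ∀ x ∈ U, (π x).IsSymm)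
    -- `Y` is a Euclidean Killing field on `U`
    (hKilling : ∀ x ∈ U, ∀ i j,
      pd i (fun y => Y y j) x + pd j (fun y => Y y i) x = 0)
    -- momentum constraint `Σ_{l,j} ḡˡʲ π̄_{il;j} = 0` on `U`
    (hconstraint : ∀ x ∈ U, ∀ i,
      ∑ l, ∑ j, (g x)⁻¹ l j * covDerivPi g π i l j x = 0) :
    ∀ x ∈ U,
      ∑ l, ∑ j, (g x)⁻¹ l j * covDerivOmega g π Y l j x
        = (∑ i, ∑ l, ∑ j,
            ((g x)⁻¹ l j - (if l = j then (1 : ℝ) else 0))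
              * π x i l * pd j (fun y => Y y i) x)
          + (∑ i, ∑ l, ∑ j, ∑ s,
              (g x)⁻¹ l j * π x i l * Y x s * christoffel g i j s x) := by
  intro x hx
  have hUx : U ∈ nhds x := hU.mem_nhds hx
  have hπd : ∀ i j, DifferentiableAt ℝ (fun y => π y i j) x := fun i j =>
    ((hπ i j).contDiffAt hUx).differentiableAt (by simp)
  have hYd : ∀ i, DifferentiableAt ℝ (fun y => Y y i) x := fun i =>
    ((hY i).contDiffAt hUx).differentiableAt (by simp)
  have hdelta : ∑ i, ∑ l, ∑ j, (if l = j then (1 : ℝ) else 0) * π x i l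
      * pd j (fun y => Y y i) x = 0 := by
    simpa [ite_mul] using sum_symm_mul_antisymm_eq_zero (π x)
      (fun i l => pd l (fun y => Y y i) x) (fun i l => (hπsymm x hx).apply l i)
      (fun i l => hKilling x hx l i)
  have hmom : ∑ i, ∑ l, ∑ j, (g x)⁻¹ l j * covDerivPi g π i l j x * Y x i = 0 := by
    refine Finset.sum_eq_zero fun i _ => ?_
    simp only [← Finset.sum_mul]
    rw [hconstraint x hx i, zero_mul]
  have hsplit : ∑ l, ∑ j, (g x)⁻¹ l j * covDerivOmega g π Y l j x
      = ∑ i, ∑ l, ∑ j, (g x)⁻¹ l j * (covDerivPi g π i l j x * Y x i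
          + π x i l * pd j (fun y => Y y i) x
          + ∑ s, π x i l * Y x s * christoffel g i j s x) := by
    conv_rhs => rw [Finset.sum_comm]
    refine Finset.sum_congr rfl fun l _ => ?_
    conv_rhs => rw [Finset.sum_comm]
    refine Finset.sum_congr rfl fun j _ => ?_
    rw [covDerivOmega_eq g π Y x hπd hYd, Finset.mul_sum]
  rw [hsplit]
  simp only [mul_add, Finset.sum_add_distrib, sub_mul, Finset.sum_sub_distrib, hdelta,
    Finset.mul_sum, ← mul_assoc, sub_zero]
  rw [hmom, zero_add]
end
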